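/- Let n ≡ 1 (mod 8) be square-free with n > 1, and let χ_n(·) = (n/·) be the real primitive Dirichlet character of conductor n. Then for j = 1, 2: L(1/2, χ_n)^j = (2 / (1 − 1/√2)^{2j}) · Σ_{ν ≥ 1, ν odd} [χ_n(ν) d_j(ν) / √ν] · ω_j(ν (π/n)^{j/2}), where d_j is the j-fold divisor function (d_1(ν) = 1 and d_2(ν) is the number of divisors of ν). -/

import Mathlib

/-!
The identity is an approximate functional equation, obtained from a contour integral against an
even entire function. Put
`F(z) = Γ(z/2 + 1/4)/Γ(1/4) · (1 - 2^{z - 1/2}) (1 - 2^{-z - 1/2}) L(1/2 + z, χ_n) (π/n)^{-z/2}`.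
The functional equation of `L(s, χ_n)` makes `F` even, and the completed `L`-function is bounded
on vertical strips, so shifting the line `Re z = 1` to `Re z = -1` and using the symmetry gives
`∫ F(z)^j dz/z = πi F(0)^j` over `Re z = 1` (`even_line`), where
`F(0) = (1 - 1/√2)^2 L(1/2, χ_n)`.
On `Re z = 1` the factor `(1 - 2^{-1/2 - z}) L(1/2 + z, χ_n)` is the Dirichlet series of `χ_n`
restricted to odd integers, because `χ_n(2) = 1` for `n ≡ 1 (mod 8)` (`LSeries_oddChi`); its square
has coefficients `χ_n(ν) d_2(ν)` on odd `ν` (`convolution_oddChi`). Integrating term by term turns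
the left side into the sum of the `ω_j` (`approx_fe`).

The functional equation with root number `1` requires the sign of the quadratic Gauss sum. It is
obtained analytically: the asymptotics at two cusps of the Jacobi theta function, related by
`τ ↦ -1/τ`, give `∑ e(r²/N) = √N` for `N ≡ 1 (mod 4)` (`quadratic_gauss_sum`). Counting square roots
modulo a squarefree number (`card_sqrt_eq`) converts this into the Gauss sum of `χ_n`
(`chi_gauss`), hence into the Fourier self-duality of `χ_n` (`chi_dft`), which is what Mathlib's
functional equation for `L`-functions of functions on `ZMod n` needs.
-/

open Complex

/-- For square-free `n ≡ 1 (mod 8)`, the Dirichlet character of conductor `n` given by the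
Kronecker symbol `χ_n(a) = (n/a)` (equivalently, the Jacobi symbol `(a/n)`), and its
L-function. -/
noncomputable def Lchi (n : ℕ) (s : ℂ) : ℂ :=
  if h : n = 0 then 0
  else
    haveI : NeZero n := ⟨h⟩
    ZMod.LFunction (fun a : ZMod n => ((jacobiSym (a.val : ℤ) n : ℤ) : ℂ)) s

/-- `ω_j(ξ)`, defined via the contour integral
`(1/2πi) ∫_{(c)} [Γ(s/2+1/4)/Γ(1/4)]^j (1 - 2^{-(1/2-s)})^j ξ^{-s} ds/s`
over the vertical line `Re(s) = c` (independent of `c > 0`). -/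
noncomputable def omegaLine (j : ℕ) (c : ℝ) (ξ : ℝ) : ℂ :=
  (2 * Real.pi)⁻¹ * ∫ t : ℝ,
    (Complex.Gamma (((c : ℂ) + t * I) / 2 + 1 / 4) / Complex.Gamma (1 / 4)) ^ j *
      (1 - (2 : ℂ) ^ (((c : ℂ) + t * I) - 1 / 2)) ^ j *
      (ξ : ℂ) ^ (-((c : ℂ) + t * I)) / ((c : ℂ) + t * I)

section
open Filter Topology MeasureTheory Set

/-! ### Shifting vertical lines; bounds for completed L-functions on vertical strips -/

/-- The Cauchy integral theorem on the rectangles `[a, b] × [-T, T]`: if `f` is `O(1/|Im z|)` in the strip, the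
horizontal sides contribute nothing in the limit. The truncated integrals need not converge. -/
lemma rect_tendsto (f : ℂ → ℂ) {a b : ℝ} (hab : a ≤ b)
    (hd : ∀ z : ℂ, a ≤ z.re → z.re ≤ b → DifferentiableAt ℂ f z) (C : ℝ)
    (hC : ∀ z : ℂ, a ≤ z.re → z.re ≤ b → 1 ≤ |z.im| → ‖f z‖ ≤ C / |z.im|) :
    Tendsto (fun T : ℝ => (∫ t in (-T)..T, f ((b : ℂ) + t * I))
      - ∫ t in (-T)..T, f ((a : ℂ) + t * I)) atTop (𝓝 0) := by
  have hlim : Tendsto (fun T : ℝ => 2 * (C * |b - a|) * T⁻¹) atTop (𝓝 0) := by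
    simpa using tendsto_inv_atTop_zero.const_mul (2 * (C * |b - a|))
  refine squeeze_zero_norm' ?_ hlim
  filter_upwards [eventually_ge_atTop (1 : ℝ)] with T hT
  have key := integral_boundary_rect_eq_zero_of_differentiableOn f ((a : ℂ) + (-T : ℝ) * I)
    ((b : ℂ) + (T : ℝ) * I) (fun z hz => by
      simp only [mem_reProdIm, add_re, ofReal_re, mul_re, ofReal_im, I_re, I_im, add_im, mul_im,
        mul_zero, mul_one, sub_zero, add_zero, zero_add, uIcc_of_le hab] at hz
      exact (hd z hz.1.1 hz.1.2).differentiableWithinAt)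
  simp only [add_re, ofReal_re, mul_re, ofReal_im, I_re, I_im, add_im, mul_im,
        mul_zero, mul_one, sub_zero, add_zero, zero_add] at key
  have hb (T' : ℝ) (h : |T'| = T) : ‖∫ x : ℝ in a..b, f (x + T' * I)‖ ≤ C / T * |b - a| := by
    refine intervalIntegral.norm_integral_le_of_norm_le_const fun x hx => ?_
    rw [uIoc_of_le hab] at hx
    have := hC (x + T' * I) (by simpa using hx.1.le) (by simpa using hx.2) (by simpa [h] using hT)
    simpa [h] using this
  have h1 := hb T (abs_of_nonneg (by linarith))
  have h2 := hb (-T) (by rw [abs_neg, abs_of_nonneg (by linarith)])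
  set A := ∫ t in (-T)..T, f ((b : ℂ) + t * I)
  set B := ∫ t in (-T)..T, f ((a : ℂ) + t * I)
  set X := ∫ x : ℝ in a..b, f (x + T * I)
  set Y := ∫ x : ℝ in a..b, f (x + (-T : ℝ) * I)
  have h3 : A - B = I * (Y - X) := by
    have h4 : I * (Y - X + I • A - I • B) = 0 := by rw [key, mul_zero]
    simp only [smul_eq_mul] at h4
    linear_combination -h4 + (A - B) * I_sq
  rw [h3, norm_mul, norm_I, one_mul]
  refine (norm_sub_le _ _).trans ?_
  calc _ ≤ C / T * |b - a| + C / T * |b - a| := add_le_add h2 h1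
    _ = _ := by ring

/-- The integral of `f` over a vertical line does not depend on the line. -/
lemma vertical_eq (f : ℂ → ℂ) {a b : ℝ} (hab : a ≤ b)
    (hd : ∀ z : ℂ, a ≤ z.re → z.re ≤ b → DifferentiableAt ℂ f z) (C : ℝ)
    (hC : ∀ z : ℂ, a ≤ z.re → z.re ≤ b → 1 ≤ |z.im| → ‖f z‖ ≤ C / |z.im|)
    (ha : Integrable fun t : ℝ => f ((a : ℂ) + t * I))
    (hb : Integrable fun t : ℝ => f ((b : ℂ) + t * I)) :
    ∫ t : ℝ, f ((a : ℂ) + t * I) = ∫ t : ℝ, f ((b : ℂ) + t * I) := by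
  have h1 := rect_tendsto f hab hd C hC
  have h2 := (intervalIntegral_tendsto_integral hb tendsto_neg_atTop_atBot tendsto_id).sub
    (intervalIntegral_tendsto_integral ha tendsto_neg_atTop_atBot tendsto_id)
  exact (sub_eq_zero.mp (tendsto_nhds_unique h2 h1)).symm

/-- For an even entire `F` bounded on `|Re z| ≤ 1`, the integral of `F(z)/z` over `Re z = 1` is
half of what the residue at `0` would contribute to a closed contour. The integrand is split as `(F(z) - F(0))/z + F(0)/z`: the first part is odd and
entire, so its symmetric integrals over `Re z = ±1` are opposite and asymptotically equal; the
second is an arctangent. -/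
lemma even_line (F : ℂ → ℂ) (hF : Differentiable ℂ F) (heven : ∀ z, F (-z) = F z) (C : ℝ)
    (hC : ∀ z : ℂ, |z.re| ≤ 1 → ‖F z‖ ≤ C)
    (hint : Integrable fun t : ℝ => F ((1 : ℝ) + t * I) / ((1 : ℝ) + t * I)) :
    ∫ t : ℝ, F ((1 : ℝ) + t * I) / ((1 : ℝ) + t * I) = Real.pi * F 0 := by
  set H : ℂ → ℂ := dslope F 0 with hH
  have hH0 : ∀ z ≠ 0, H z = (F z - F 0) / z := fun z hz => by
    rw [hH, dslope_of_ne _ hz, slope_def_field, sub_zero]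
  have hHd : Differentiable ℂ H := by
    intro z
    have := (differentiableOn_dslope (f := F) (s := univ) (c := 0) univ_mem).mpr
      hF.differentiableOn
    exact (this z (mem_univ z)).differentiableAt univ_mem
  have hone (t : ℝ) : ((1 : ℝ) : ℂ) + t * I ≠ 0 := fun h => by
    have := congrArg re h; simp at this
  -- `H` is odd away from `0`, which is all the line integrals see
  have hodd (z : ℂ) (hz : z ≠ 0) : H (-z) = -H z := by
    rw [hH0 z hz, hH0 _ (neg_ne_zero.mpr hz), heven, div_neg]
  have hlim := rect_tendsto H (a := -1) (b := 1) (by norm_num) (fun z _ _ => hHd z) (C + C)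
    (fun z h1 h2 h3 => by
      have hz : z ≠ 0 := fun h => by simp [h] at h3; linarith
      rw [hH0 z hz, norm_div]
      have : 0 ≤ C + C := by
        have := (norm_nonneg _).trans (hC 0 (by simp)); linarith
      have h4 : 0 < |z.im| := by linarith
      refine div_le_div₀ this ((norm_sub_le _ _).trans (add_le_add (hC z (abs_le.mpr ⟨h1, h2⟩))
        (hC 0 (by simp)))) h4 (abs_im_le_norm z))
  have hrefl (T : ℝ) : ∫ t in (-T)..T, H (((-1 : ℝ) : ℂ) + t * I) =
      -∫ t in (-T)..T, H (((1 : ℝ) : ℂ) + t * I) := by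
    rw [← intervalIntegral.integral_neg]
    have := intervalIntegral.integral_comp_neg (a := -T) (b := T)
      (fun t : ℝ => H (((-1 : ℝ) : ℂ) + t * I))
    rw [neg_neg] at this
    rw [← this]
    refine intervalIntegral.integral_congr fun t _ => ?_
    rw [← hodd _ (hone t)]
    congr 1
    push_cast
    ring
  simp_rw [hrefl, sub_neg_eq_add, ← two_mul] at hlim
  have hlim' : Tendsto (fun T : ℝ => ∫ t in (-T)..T, H (((1 : ℝ) : ℂ) + t * I)) atTop (𝓝 0) := by
    have := hlim.const_mul (1/2 : ℂ)
    simpa [← mul_assoc] using this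
  have hmain := intervalIntegral_tendsto_integral hint tendsto_neg_atTop_atBot tendsto_id
  have harc : ∀ T : ℝ, ∫ t in (-T)..T, (((1 : ℝ) : ℂ) + t * I)⁻¹ =
      ((2 * Real.arctan T : ℝ) : ℂ) := by
    intro T
    have hsplit (t : ℝ) : (((1 : ℝ) : ℂ) + t * I)⁻¹ =
        ((1 / (1 + t ^ 2) : ℝ) : ℂ) - ((t / (1 + t ^ 2) : ℝ) : ℂ) * I := by
      have h1 : (1 + (t : ℂ) ^ 2) ≠ 0 := by
        have : (0 : ℝ) < 1 + t ^ 2 := by positivity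
        exact_mod_cast this.ne'
      have h2 := hone t
      push_cast at h2 ⊢
      field_simp
      linear_combination (t : ℂ) ^ 2 * I_sq
    have hc1 : Continuous fun t : ℝ => 1 / (1 + t ^ 2) :=
      continuous_const.div (by fun_prop) fun t => by positivity
    have hc2 : Continuous fun t : ℝ => t / (1 + t ^ 2) :=
      continuous_id.div (by fun_prop) fun t => by positivity
    have hz : ∫ t in (-T)..T, t / (1 + t ^ 2) = 0 := by
      have := intervalIntegral.integral_comp_neg (a := -T) (b := T)
        (fun t : ℝ => t / (1 + t ^ 2))
      rw [neg_neg] at this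
      have h2 : ∫ t in (-T)..T, (-t) / (1 + (-t) ^ 2) = - ∫ t in (-T)..T, t / (1 + t ^ 2) := by
        rw [← intervalIntegral.integral_neg]
        refine intervalIntegral.integral_congr fun t _ => ?_
        simp [neg_div]
      linarith
    simp_rw [hsplit]
    rw [intervalIntegral.integral_sub, intervalIntegral.integral_mul_const,
      intervalIntegral.integral_ofReal, intervalIntegral.integral_ofReal, hz,
      integral_one_div_one_add_sq, Real.arctan_neg]
    · push_cast; ring
    · exact (continuous_ofReal.comp hc1).intervalIntegrable _ _
    · exact ((continuous_ofReal.comp hc2).mul continuous_const).intervalIntegrable _ _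
  have hdecomp (T : ℝ) : ∫ t in (-T)..T, F ((1 : ℝ) + t * I) / ((1 : ℝ) + t * I) =
      (∫ t in (-T)..T, H (((1 : ℝ) : ℂ) + t * I)) + F 0 * ((2 * Real.arctan T : ℝ) : ℂ) := by
    rw [← harc, ← intervalIntegral.integral_const_mul, ← intervalIntegral.integral_add]
    · refine intervalIntegral.integral_congr fun t _ => ?_
      rw [hH0 _ (hone t)]
      ring
    · have : Continuous fun t : ℝ => H (((1 : ℝ) : ℂ) + t * I) :=
        hHd.continuous.comp (by fun_prop)
      exact this.intervalIntegrable _ _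
    · have : Continuous fun t : ℝ => F 0 * (((1 : ℝ) : ℂ) + t * I)⁻¹ :=
        continuous_const.mul (Continuous.inv₀ (by fun_prop) hone)
      exact this.intervalIntegrable _ _
  have hat : Tendsto (fun T : ℝ => ((2 * Real.arctan T : ℝ) : ℂ)) atTop (𝓝 (Real.pi : ℂ)) := by
    have h := (Real.tendsto_arctan_atTop.mono_right nhdsWithin_le_nhds).const_mul 2
    rw [show 2 * (Real.pi / 2) = Real.pi by ring] at h
    exact (continuous_ofReal.tendsto _).comp h
  have hfin : Tendsto (fun T : ℝ => ∫ t in (-T)..T, F ((1 : ℝ) + t * I) / ((1 : ℝ) + t * I))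
      atTop (𝓝 (0 + F 0 * Real.pi)) := by
    simp_rw [hdecomp]
    exact hlim'.add (hat.const_mul _)
  rw [tendsto_nhds_unique hmain hfin]
  ring

/-- An everywhere convergent Mellin transform is bounded on vertical strips, since
`t ^ Re s ≤ t ^ a + t ^ b` for `a ≤ Re s ≤ b`. -/
lemma mellin_bounded (f : ℝ → ℂ) (a b : ℝ) (h : ∀ s : ℂ, MellinConvergent f s) :
    ∃ C : ℝ, ∀ s : ℂ, a ≤ s.re → s.re ≤ b → ‖mellin f s‖ ≤ C := by
  have hn (c : ℝ) : IntegrableOn (fun t : ℝ => t ^ (c - 1) * ‖f t‖) (Ioi 0) := by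
    have := (mellin_convergent_iff_norm (f := f) (s := (c : ℂ)) subset_rfl measurableSet_Ioi
      ?_).mp (h c)
    · simpa using this
    · have h1 := (h 1).aestronglyMeasurable
      simpa using h1
  refine ⟨∫ t in Ioi (0 : ℝ), (t ^ (a - 1) * ‖f t‖ + t ^ (b - 1) * ‖f t‖), fun s hs1 hs2 => ?_⟩
  rw [mellin]
  refine norm_integral_le_of_norm_le ((hn a).add (hn b)) ?_
  refine (ae_restrict_iff' measurableSet_Ioi).mpr (Eventually.of_forall fun t ht => ?_)
  rw [norm_smul, norm_cpow_eq_rpow_re_of_pos ht, ← add_mul, sub_re, one_re]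
  refine mul_le_mul_of_nonneg_right ?_ (norm_nonneg _)
  have ht' : (0 : ℝ) < t := ht
  rcases le_total 1 t with h1 | h1
  · have := Real.rpow_le_rpow_of_exponent_le h1 (sub_le_sub_right hs2 1)
    have h2 := Real.rpow_nonneg ht'.le (a - 1)
    linarith
  · have := Real.rpow_le_rpow_of_exponent_ge ht' h1 (sub_le_sub_right hs1 1)
    have h2 := Real.rpow_nonneg ht'.le (b - 1)
    linarith

/-- `Λ₀` is the Mellin transform of the modified function, which converges everywhere. -/
lemma WeakFEPair_bounded (P : WeakFEPair ℂ) (a b : ℝ) :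
    ∃ C : ℝ, ∀ s : ℂ, a ≤ s.re → s.re ≤ b → ‖P.Λ₀ s‖ ≤ C :=
  mellin_bounded P.f_modif a b fun s =>
    (P.isStrongFEPair_toStrongFEPair.hasMellin s).1

lemma completedHurwitz_bounded (x : UnitAddCircle) (a b : ℝ) :
    ∃ C : ℝ, ∀ s : ℂ, a ≤ s.re → s.re ≤ b →
      ‖HurwitzZeta.completedHurwitzZetaEven₀ x s‖ ≤ C := by
  obtain ⟨C, hC⟩ := WeakFEPair_bounded (HurwitzZeta.hurwitzEvenFEPair x) (a / 2) (b / 2)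
  refine ⟨C / 2, fun s h1 h2 => ?_⟩
  have hre : (s / 2).re = s.re / 2 := by simp
  rw [HurwitzZeta.completedHurwitzZetaEven₀, norm_div, Complex.norm_two]
  have := hC (s / 2) (by rw [hre]; linarith) (by rw [hre]; linarith)
  linarith

lemma completedL_bounded {N : ℕ} [NeZero N] (Φ : ZMod N → ℂ) (he : Φ.Even) (h0 : Φ 0 = 0)
    (hs : ∑ j, Φ j = 0) (a b : ℝ) :
    ∃ C : ℝ, ∀ s : ℂ, a ≤ s.re → s.re ≤ b → ‖ZMod.completedLFunction Φ s‖ ≤ C := by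
  choose C hC using fun j : ZMod N => completedHurwitz_bounded (ZMod.toAddCircle j) a b
  refine ⟨(N : ℝ) ^ (-a) * ∑ j, ‖Φ j‖ * C j, fun s h1 h2 => ?_⟩
  have hN : (1 : ℝ) ≤ N := by exact_mod_cast NeZero.one_le
  -- the part attached to the odd Hurwitz zeta functions cancels because `Φ` is even
  have hodd : ∑ j, Φ j * HurwitzZeta.completedHurwitzZetaOdd (ZMod.toAddCircle j) s = 0 := by
    refine (he.mul_odd fun j => ?_).sum_eq_zero
    rw [map_neg, HurwitzZeta.completedHurwitzZetaOdd_neg]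
  rw [ZMod.completedLFunction_eq, h0, hs, ZMod.completedLFunction₀, hodd]
  simp only [mul_zero, zero_div, sub_zero, add_zero]
  rw [norm_mul]
  refine mul_le_mul ?_ ?_ (norm_nonneg _) (by positivity)
  · rw [show (N : ℂ) = ((N : ℝ) : ℂ) by simp, norm_cpow_eq_rpow_re_of_pos (by linarith)]
    exact Real.rpow_le_rpow_of_exponent_le hN (by simpa using h1)
  · refine (norm_sum_le _ _).trans (Finset.sum_le_sum fun j _ => ?_)
    rw [norm_mul]
    exact mul_le_mul_of_nonneg_left (hC j s h1 h2) (norm_nonneg _)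

/-! ### The quadratic Gauss sum via theta asymptotics -/

lemma real_mul_cpow {r : ℝ} (hr : 0 < r) {a : ℂ} (ha : a ≠ 0) (s : ℂ) :
    ((r : ℂ) * a) ^ s = (r : ℂ) ^ s * a ^ s := by
  have hr' : (r : ℂ) ≠ 0 := by exact_mod_cast hr.ne'
  rw [cpow_def_of_ne_zero (mul_ne_zero hr' ha), cpow_def_of_ne_zero hr', cpow_def_of_ne_zero ha,
    log_ofReal_mul hr ha, ← Complex.exp_add, ← add_mul, ofReal_log hr.le]

/-- For a real first argument, only the term `n = 0` of the theta series survives as `Im τ → ∞`. -/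
lemma theta_tendsto_one {ι : Type*} {l : Filter ι} (x : ℝ) (τ : ι → ℂ)
    (hτ : Tendsto (fun i => (τ i).im) l atTop) :
    Tendsto (fun i => jacobiTheta₂ x (τ i)) l (𝓝 1) := by
  have h1 : ∑' n : ℤ, (if n = 0 then (1 : ℂ) else 0) = 1 := tsum_ite_eq 0 _
  rw [← h1]
  have hsum : Summable fun n : ℤ => ‖jacobiTheta₂_term n 0 I‖ :=
    ((summable_jacobiTheta₂_term_iff 0 I).mpr (by simp)).norm
  refine tendsto_tsum_of_dominated_convergence hsum ?_ ?_
  · intro n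
    by_cases hn : n = 0
    · simpa [hn, jacobiTheta₂_term] using tendsto_const_nhds
    · rw [if_neg hn, tendsto_zero_iff_norm_tendsto_zero]
      simp_rw [norm_jacobiTheta₂_term, ofReal_im, mul_zero, sub_zero]
      refine Real.tendsto_exp_atBot.comp ?_
      refine hτ.const_mul_atTop_of_neg ?_
      have : (0 : ℝ) < (n : ℝ) ^ 2 := by positivity
      nlinarith [Real.pi_pos]
  · filter_upwards [hτ.eventually_ge_atTop 1] with i hi n
    rw [norm_jacobiTheta₂_term, norm_jacobiTheta₂_term]
    simp only [ofReal_im, zero_im, mul_zero, sub_zero, I_im, mul_one]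
    refine Real.exp_le_exp.mpr ?_
    have : 0 ≤ Real.pi * (n : ℝ) ^ 2 := by positivity
    nlinarith

/-- Poisson summation for a Gaussian on the residue class `r` modulo `q`, deduced from the
functional equation of the two-variable theta function. -/
lemma theta_class {q : ℕ} (hq : 0 < q) (r : ℕ) {w : ℂ} (hw : 0 < w.re) :
    HasSum (fun m : ℤ => cexp (-Real.pi * ((q * m + r : ℤ) : ℂ) ^ 2 * w))
      (1 / (q * w ^ (1 / 2 : ℂ)) * jacobiTheta₂ ((r / q : ℝ) : ℂ) (I / (q ^ 2 * w))) := by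
  have hq' : (0 : ℝ) < q := by exact_mod_cast hq
  have hqc : (q : ℂ) ≠ 0 := by exact_mod_cast hq.ne'
  have hw0 : w ≠ 0 := fun h => by simp [h] at hw
  have him : 0 < (I * (q ^ 2 * w)).im := by
    have : ((q : ℂ) ^ 2 * w) = (((q : ℝ) ^ 2 : ℝ) : ℂ) * w := by push_cast; ring
    rw [this, mul_im, re_ofReal_mul]
    simp only [I_re, zero_mul, I_im, one_mul, zero_add]
    positivity
  have h := (hasSum_jacobiTheta₂_term (I * (q * r * w)) him).mul_left
    (cexp (-Real.pi * r ^ 2 * w))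
  rw [jacobiTheta₂_functional_equation] at h
  have hterm : (fun m : ℤ => cexp (-Real.pi * ((q * m + r : ℤ) : ℂ) ^ 2 * w)) =
      fun m : ℤ => cexp (-Real.pi * r ^ 2 * w) *
        jacobiTheta₂_term m (I * (q * r * w)) (I * (q ^ 2 * w)) := by
    funext m
    rw [jacobiTheta₂_term, ← Complex.exp_add]
    congr 1
    push_cast
    linear_combination (-(2 * Real.pi * m * q * r * w) - Real.pi * m ^ 2 * q ^ 2 * w) * I_sq
  rw [hterm]
  have hval : 1 / (q * w ^ (1 / 2 : ℂ)) * jacobiTheta₂ ((r / q : ℝ) : ℂ) (I / (q ^ 2 * w)) =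
      cexp (-Real.pi * r ^ 2 * w) * (1 / (-I * (I * (q ^ 2 * w))) ^ (1 / 2 : ℂ) *
        cexp (-Real.pi * I * (I * (q * r * w)) ^ 2 / (I * (q ^ 2 * w))) *
        jacobiTheta₂ (I * (q * r * w) / (I * (q ^ 2 * w))) (-1 / (I * (q ^ 2 * w)))) := by
    have e1 : -I * (I * (q ^ 2 * w)) = ((q ^ 2 : ℝ) : ℂ) * w := by
      push_cast; linear_combination (-(q : ℂ) ^ 2 * w) * I_sq
    have e2 : I * (q * r * w) / (I * (q ^ 2 * w)) = ((r / q : ℝ) : ℂ) := by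
      push_cast
      field_simp
    have e3 : -1 / (I * (q ^ 2 * w)) = I / (q ^ 2 * w) := by
      field_simp
      simp
    have e4 : (((q ^ 2 : ℝ) : ℂ)) ^ (1 / 2 : ℂ) = q := by
      rw [show (1 / 2 : ℂ) = ((1 / 2 : ℝ) : ℂ) by norm_num, ← ofReal_cpow (by positivity),
        ← Real.sqrt_eq_rpow, Real.sqrt_sq hq'.le, ofReal_natCast]
    have e5 : -Real.pi * I * (I * (q * r * w)) ^ 2 / (I * (q ^ 2 * w)) = Real.pi * r ^ 2 * w := by
      field_simp
      linear_combination (-(r:ℂ) ^ 2) * I_sq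
    rw [e1, e2, e3, e5, real_mul_cpow (by positivity) hw0, e4]
    have e6 : cexp (-Real.pi * r ^ 2 * w) * cexp (Real.pi * r ^ 2 * w) = 1 := by
      rw [← Complex.exp_add, show -(Real.pi : ℂ) * r ^ 2 * w + Real.pi * r ^ 2 * w = 0 by ring,
        Complex.exp_zero]
    linear_combination (-(1 / (q * w ^ (1 / 2 : ℂ)) *
      jacobiTheta₂ ((r / q : ℝ) : ℂ) (I / (q ^ 2 * w)))) * e6
  rw [hval]
  exact h

/-- A theta series with `q`-periodic coefficients is asymptotic to `w^{-1/2}` times the mean of its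
coefficients, as `w → 0` with `Re (1/w) → ∞`. -/
lemma theta_asymp {ι : Type*} {l : Filter ι} {q : ℕ} [NeZero q] (f : ℤ → ℂ)
    (hf : ∀ m n : ℤ, f (q * m + n) = f n) (w : ι → ℂ) (hw : ∀ i, 0 < (w i).re)
    (hlim : Tendsto (fun i => (1 / w i).re) l atTop) :
    Tendsto (fun i => (w i) ^ (1 / 2 : ℂ) * ∑' n : ℤ, f n * cexp (-Real.pi * (n : ℂ) ^ 2 * w i)) l
      (𝓝 (1 / q * ∑ r : Fin q, f (r : ℕ))) := by
  have hq : 0 < q := Nat.pos_of_ne_zero (NeZero.ne q)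
  have hqc : (q : ℂ) ≠ 0 := by exact_mod_cast hq.ne'
  have hval (i : ι) : (w i) ^ (1 / 2 : ℂ) *
      ∑' n : ℤ, f n * cexp (-Real.pi * (n : ℂ) ^ 2 * w i) =
      1 / q * ∑ r : Fin q, f (r : ℕ) *
        jacobiTheta₂ (((r : ℕ) / q : ℝ) : ℂ) (I / (q ^ 2 * w i)) := by
    have hw0 : w i ≠ 0 := fun h => by have := hw i; simp [h] at this
    have hw2 : (w i) ^ (1 / 2 : ℂ) ≠ 0 := by
      rw [cpow_def_of_ne_zero hw0]; exact exp_ne_zero _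
    have hs : HasSum (fun p : ℤ × Fin q => f ((Int.divModEquiv q).symm p) *
        cexp (-Real.pi * (((Int.divModEquiv q).symm p : ℤ) : ℂ) ^ 2 * w i))
        (∑ r : Fin q, f (r : ℕ) * (1 / (q * (w i) ^ (1 / 2 : ℂ)) *
          jacobiTheta₂ (((r : ℕ) / q : ℝ) : ℂ) (I / (q ^ 2 * w i)))) := by
      set g : ℤ × Fin q → ℂ := fun p => f ((Int.divModEquiv q).symm p) *
        cexp (-Real.pi * (((Int.divModEquiv q).symm p : ℤ) : ℂ) ^ 2 * w i) with hg
      have h1 (r : Fin q) : HasSum (fun p : ℤ × Fin q => if p.2 = r then g p else 0)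
          (f (r : ℕ) * (1 / (q * (w i) ^ (1 / 2 : ℂ)) *
          jacobiTheta₂ (((r : ℕ) / q : ℝ) : ℂ) (I / (q ^ 2 * w i)))) := by
        have hinj : Function.Injective fun m : ℤ => (m, r) := fun a b h => congrArg Prod.fst h
        rw [← hinj.hasSum_iff]
        · have h2 := (theta_class hq r (hw i)).mul_left (f (r : ℕ))
          refine h2.congr_fun fun m => ?_
          simp only [Function.comp, if_true, hg, Int.divModEquiv_symm_apply]
          rw [mul_comm m (q : ℤ), hf]
        · rintro ⟨m, r'⟩ hp
          refine if_neg fun h => hp ⟨m, ?_⟩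
          rw [← h]
      have h3 := hasSum_sum (s := Finset.univ) fun (r : Fin q) _ => h1 r
      refine h3.congr_fun fun p => ?_
      simp
    have hs' : HasSum (fun n : ℤ => f n * cexp (-Real.pi * (n : ℂ) ^ 2 * w i)) _ :=
      (Equiv.hasSum_iff (Int.divModEquiv q).symm).mp hs
    rw [hs'.tsum_eq, Finset.mul_sum,
      Finset.mul_sum]
    refine Finset.sum_congr rfl fun r _ => ?_
    field_simp
  simp_rw [hval]
  refine Tendsto.const_mul _ (tendsto_finsetSum _ fun r _ => ?_)
  have : Tendsto (fun i => f (r : ℕ) *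
        jacobiTheta₂ (((r : ℕ) / q : ℝ) : ℂ) (I / (q ^ 2 * w i))) l (𝓝 (f (r : ℕ) * 1)) := by
    refine Tendsto.const_mul _ (theta_tendsto_one _ _ ?_)
    have e (i : ι) : (I / (q ^ 2 * w i)).im = ((q : ℝ) ^ 2)⁻¹ * (1 / w i).re := by
      have : I / (q ^ 2 * w i) = I * ((((q : ℝ) ^ 2)⁻¹ : ℝ) * (1 / w i)) := by
        push_cast
        rw [div_eq_mul_inv, mul_inv, one_div]
      rw [this, mul_im, re_ofReal_mul]
      simp
    simp_rw [e]
    exact hlim.const_mul_atTop (by positivity)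
  simpa using this

/-- The quadratic Gauss sum, sign included, for `N ≡ 1 (mod 4)`. The theta function at
`τ = -N/2 + it` is a theta series with coefficients of period `2`, and at
`-1/τ = 2/N + i t v(t)` it is one with coefficients `e(n²/N)`; comparing the two asymptotics of
`theta_asymp` as `t → 0⁺` gives the value. -/
theorem quadratic_gauss_sum (N : ℕ) [NeZero N] (hN : N % 4 = 1) :
    ∑ r : Fin N, cexp (2 * Real.pi * I * ((r : ℕ) : ℂ) ^ 2 / N) = ((√N : ℝ) : ℂ) := by
  have hN0 : (0 : ℝ) < N := by exact_mod_cast Nat.pos_of_ne_zero (NeZero.ne N)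
  -- `l` is the filter `t → 0⁺` on the positive reals
  let l : Filter {t : ℝ // 0 < t} := comap (fun t => (t : ℝ)⁻¹) atTop
  have hNc : (N : ℂ) ≠ 0 := by exact_mod_cast hN0.ne'
  have hl : Tendsto (fun t : {t : ℝ // 0 < t} => (t : ℝ)⁻¹) l atTop := tendsto_comap
  have hne : l.NeBot := by
    refine comap_neBot fun s hs => ?_
    obtain ⟨a, ha, hs⟩ := ((eventually_gt_atTop (0 : ℝ)).and hs).exists
    exact ⟨⟨a⁻¹, inv_pos.mpr ha⟩, by show (a⁻¹)⁻¹ ∈ s; rw [inv_inv]; exact hs⟩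
  have hl0 : Tendsto (fun t : {t : ℝ // 0 < t} => (t : ℝ)) l (𝓝 0) := by
    exact (tendsto_inv_atTop_zero.comp hl).congr fun t => by simp
  let v : {t : ℝ // 0 < t} → ℂ := fun t => 1 / ((N : ℂ) ^ 2 / 4 - I * N * (t : ℝ) / 2)
  let f₁ : ℤ → ℂ := fun n => cexp (2 * Real.pi * I * (n : ℂ) ^ 2 / N)
  let f₂ : ℤ → ℂ := fun n => cexp (-Real.pi * I * N * (n : ℂ) ^ 2 / 2)
  have hf₁ (m n : ℤ) : f₁ (N * m + n) = f₁ n := by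
    refine exp_eq_exp_iff_exists_int.mpr ⟨N * m ^ 2 + 2 * m * n, ?_⟩
    push_cast
    field_simp
    ring
  have hf₂ (m n : ℤ) : f₂ ((2 : ℕ) * m + n) = f₂ n := by
    refine exp_eq_exp_iff_exists_int.mpr ⟨-(N * (m ^ 2 + m * n)), ?_⟩
    push_cast
    ring
  have hden (t : {t : ℝ // 0 < t}) : (N : ℂ) ^ 2 / 4 - I * N * (t : ℝ) / 2 ≠ 0 := fun h => by
    have h1 := congrArg re h
    have : ((N : ℂ) ^ 2 / 4 - I * N * (t : ℝ) / 2) =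
      (((N : ℝ) ^ 2 / 4 : ℝ) : ℂ) - ((N * t / 2 : ℝ) : ℂ) * I := by push_cast; ring
    rw [this, sub_re, re_ofReal_mul, I_re, ofReal_re, mul_zero, sub_zero, zero_re] at h1
    have : (0 : ℝ) < (N : ℝ) ^ 2 / 4 := by positivity
    exact this.ne' h1
  have hv0 (t) : v t ≠ 0 := one_div_ne_zero (hden t)
  have hinv (t : {t : ℝ // 0 < t}) : (1 / ((t : ℝ) * v t)).re = N ^ 2 / 4 * (t : ℝ)⁻¹ := by
    have ht : ((t : ℝ) : ℂ) ≠ 0 := by exact_mod_cast t.2.ne'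
    have : 1 / ((t : ℝ) * v t) = ((N ^ 2 / 4 * (t : ℝ)⁻¹ : ℝ) : ℂ) - ((N / 2 : ℝ) : ℂ) * I := by
      simp only [v]
      push_cast
      have := hden t
      field_simp
    rw [this, sub_re, ofReal_re, re_ofReal_mul, I_re, mul_zero, sub_zero]
  have hpos (t : {t : ℝ // 0 < t}) : 0 < ((t : ℝ) * v t).re := by
    have h1 : 0 < (1 / ((t : ℝ) * v t)).re := by
      rw [hinv]; have := t.2; positivity
    rw [one_div, inv_re] at h1
    by_contra h
    exact absurd h1 (not_lt.mpr (div_nonpos_of_nonpos_of_nonneg (not_lt.mp h) (normSq_nonneg _)))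
  have lim₁ := theta_asymp (l := l) f₁ hf₁ (fun t => (t : ℝ) * v t) hpos (by
    simp_rw [hinv]
    exact hl.const_mul_atTop (by positivity))
  have lim₂ := theta_asymp (l := l) (q := 2) f₂ hf₂ (fun t => ((t : ℝ) : ℂ)) (fun t => by
    simpa using t.2) (by
    have : (fun t : {t : ℝ // 0 < t} => (1 / ((t : ℝ) : ℂ)).re) =
        fun t : {t : ℝ // 0 < t} => (t : ℝ)⁻¹ := by
      funext t; rw [← ofReal_one, ← ofReal_div, ofReal_re, one_div]
    rw [this]; exact hl)
  -- the functional equation of `θ` at `-N/2 + it`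
  have hfe (t : {t : ℝ // 0 < t}) :
      (I * N / 2 + (t : ℝ)) ^ (1 / 2 : ℂ) * (v t) ^ (1 / 2 : ℂ) *
      (((t : ℝ) : ℂ) ^ (1 / 2 : ℂ) *
        ∑' n : ℤ, f₂ n * cexp (-Real.pi * (n : ℂ) ^ 2 * (t : ℝ))) =
      ((t : ℝ) * v t) ^ (1 / 2 : ℂ) *
        ∑' n : ℤ, f₁ n * cexp (-Real.pi * (n : ℂ) ^ 2 * ((t : ℝ) * v t)) := by
    have hτ : (I * N / 2 + (t : ℝ) : ℂ) ≠ 0 := fun h => by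
      have := congrArg re h
      simp at this
      exact t.2.ne' this
    have hτ' : (I * (I * N / 2 + (t : ℝ)) : ℂ) ≠ 0 := mul_ne_zero I_ne_zero hτ
    have h := jacobiTheta₂_functional_equation 0 (I * (I * N / 2 + (t : ℝ)))
    have e1 : -I * (I * (I * N / 2 + (t : ℝ))) = I * N / 2 + (t : ℝ) := by
      linear_combination (-(I * N / 2 + (t : ℝ))) * I_sq
    rw [e1, zero_div] at h
    have e2 : jacobiTheta₂ 0 (I * (I * N / 2 + (t : ℝ))) =
        ∑' n : ℤ, f₂ n * cexp (-Real.pi * (n : ℂ) ^ 2 * (t : ℝ)) := by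
      refine tsum_congr fun n => ?_
      rw [jacobiTheta₂_term, ← Complex.exp_add]
      congr 1
      linear_combination (Real.pi * n ^ 2 * (I * N / 2 + (t : ℝ))) * I_sq
    have e3 : jacobiTheta₂ 0 (-1 / (I * (I * N / 2 + (t : ℝ)))) =
        ∑' n : ℤ, f₁ n * cexp (-Real.pi * (n : ℂ) ^ 2 * ((t : ℝ) * v t)) := by
      refine tsum_congr fun n => ?_
      rw [jacobiTheta₂_term, ← Complex.exp_add]
      congr 1
      have h1 := hden t
      have h2 : -1 / (I * (I * N / 2 + (t : ℝ))) = 2 / N + I * ((t : ℝ) * v t) := by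
        have hv : v t = 2 * I / (N * (I * N / 2 + (t : ℝ))) := by
          simp only [v]
          rw [div_eq_div_iff (hden t) (mul_ne_zero hNc hτ)]
          linear_combination (N * (t : ℝ)) * I_sq
        rw [hv, div_eq_iff hτ']
        have hX : (N : ℂ) * I = 2 * (I * N / 2 + (t : ℝ)) - 2 * (t : ℝ) := by ring
        generalize (I * N / 2 + (t : ℝ) : ℂ) = X at hτ hX
        have : (2 / N + I * ((t : ℝ) * (2 * I / (N * X)))) * (I * X) =
            (2 * I * X + 2 * I ^ 3 * (t : ℝ)) / N := by
          field_simp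
        rw [this, eq_div_iff hNc]
        linear_combination (-(N : ℂ) - 2 * I * (t : ℝ)) * I_sq + I * hX
      rw [h2]
      linear_combination (Real.pi * n ^ 2 * ((t : ℝ) * v t)) * I_sq
    rw [e2, e3] at h
    rw [h, real_mul_cpow t.2 (hv0 t)]
    have h3 : (I * N / 2 + (t : ℝ) : ℂ) ^ (1 / 2 : ℂ) ≠ 0 := by
      rw [cpow_def_of_ne_zero hτ]; exact exp_ne_zero _
    simp only [mul_zero, zero_div, ne_eq, OfNat.ofNat_ne_zero, not_false_eq_true, zero_pow,
      Complex.exp_zero, mul_one]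
    generalize (I * N / 2 + (t : ℝ) : ℂ) ^ (1 / 2 : ℂ) = P at h3
    generalize (∑' n : ℤ, f₁ n * cexp (-Real.pi * (n : ℂ) ^ 2 * ((t : ℝ) * v t))) = S
    field_simp
  simp_rw [← hfe] at lim₁
  have hlim3 : Tendsto (fun t : {t : ℝ // 0 < t} => (I * N / 2 + ((t : ℝ) : ℂ)) ^ (1 / 2 : ℂ)) l
      (𝓝 ((I * N / 2) ^ (1 / 2 : ℂ))) := by
    have h1 : Tendsto (fun t : {t : ℝ // 0 < t} => I * N / 2 + ((t : ℝ) : ℂ)) l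
        (𝓝 (I * N / 2)) := by
      simpa using ((continuous_ofReal.tendsto 0).comp hl0).const_add (I * N / 2)
    refine (continuousAt_cpow_const ?_).tendsto.comp h1
    right
    simpa using hN0.ne'
  have hlim4 : Tendsto (fun t : {t : ℝ // 0 < t} => (v t) ^ (1 / 2 : ℂ)) l
      (𝓝 ((((2 / N : ℝ) : ℂ) ^ 2) ^ (1 / 2 : ℂ))) := by
    have h1 : Tendsto v l (𝓝 (((2 / N : ℝ) : ℂ) ^ 2)) := by
      have h2 : Tendsto (fun t : {t : ℝ // 0 < t} => (N : ℂ) ^ 2 / 4 - I * N * (t : ℝ) / 2) l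
          (𝓝 ((N : ℂ) ^ 2 / 4)) := by
        have := (((continuous_ofReal.tendsto 0).comp hl0).const_mul (I * N / 2)).const_sub
          ((N : ℂ) ^ 2 / 4)
        simp only [ofReal_zero, mul_zero, sub_zero] at this
        refine this.congr fun t => ?_
        simp only [Function.comp]
        ring
      have h3 := h2.inv₀ (div_ne_zero (pow_ne_zero 2 hNc) (by norm_num))
      have h4 : ((N : ℂ) ^ 2 / 4)⁻¹ = ((2 / N : ℝ) : ℂ) ^ 2 := by
        push_cast
        field_simp
        norm_num
      rw [h4] at h3
      exact h3.congr fun t => (one_div _).symm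
    refine (continuousAt_cpow_const ?_).tendsto.comp h1
    left
    rw [← ofReal_pow, ofReal_re]
    positivity
  have hsq1 : (((2 / N : ℝ) : ℂ) ^ 2) ^ (1 / 2 : ℂ) = ((2 / N : ℝ) : ℂ) := by
    rw [one_div]
    exact sq_cpow_two_inv (by rw [ofReal_re]; positivity)
  have hsqN : ((√N : ℝ) : ℂ) ^ 2 = N := by
    rw [← ofReal_pow, Real.sq_sqrt hN0.le, ofReal_natCast]
  have hsq2 : (I * N / 2 : ℂ) ^ (1 / 2 : ℂ) = (√N : ℝ) * (1 + I) / 2 := by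
    have : (I * N / 2 : ℂ) = ((√N : ℝ) * (1 + I) / 2) ^ 2 := by
      linear_combination (-(1 + I) ^ 2 / 4) * hsqN - N / 4 * I_sq
    rw [this, one_div]
    refine sq_cpow_two_inv ?_
    have : ((√N : ℝ) * (1 + I) / 2 : ℂ) = ((√N / 2 : ℝ) : ℂ) * (1 + I) := by push_cast; ring
    rw [this, re_ofReal_mul]
    simp
    exact Nat.pos_of_ne_zero (NeZero.ne N)
  have hfin := tendsto_nhds_unique lim₁ ((hlim3.mul hlim4).mul lim₂)
  -- the only use of `N ≡ 1 (mod 4)`: the period-two sum is `1 - i`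
  have hf21 : f₂ ((1 : ℕ) : ℤ) = -I := by
    have h1 : cexp (-(Real.pi / 2 * I)) = -I := by
      rw [Complex.exp_neg, Complex.exp_pi_div_two_mul_I, inv_I]
    rw [← h1]
    obtain ⟨k, hk⟩ : ∃ k, N = 4 * k + 1 := ⟨N / 4, by omega⟩
    refine exp_eq_exp_iff_exists_int.mpr ⟨-k, ?_⟩
    rw [hk]
    push_cast
    ring
  have hf20 : f₂ ((0 : ℕ) : ℤ) = 1 := by simp [f₂]
  rw [hsq1, hsq2, Fin.sum_univ_two] at hfin
  simp only [Fin.val_zero, Fin.val_one, hf20, hf21] at hfin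
  have hG : ∑ r : Fin N, f₁ (r : ℕ) = ((√N : ℝ) : ℂ) := by
    push_cast at hfin
    field_simp at hfin
    linear_combination hfin / 2 - ((√N : ℝ) : ℂ) / 2 * I_sq
  rw [← hG]
  refine Finset.sum_congr rfl fun r _ => ?_
  simp [f₁]

/-! ### The Jacobi symbol and its Fourier transform -/

lemma sum_divisors_coprime {m n : ℕ} (h : m.Coprime n) (f : ℕ → ℤ)
    (hf : ∀ a ∈ m.divisors, ∀ b ∈ n.divisors, f (a * b) = f a * f b) :
    ∑ d ∈ (m * n).divisors, f d = (∑ d ∈ m.divisors, f d) * ∑ d ∈ n.divisors, f d := by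
  rw [Nat.divisors_mul, Finset.mul_def, Finset.sum_image, Finset.sum_product, Finset.sum_mul_sum]
  · exact Finset.sum_congr rfl fun a ha => Finset.sum_congr rfl fun b hb => hf a ha b hb
  · intro x hx y hy hxy
    exact h.mul_injOn_divisors hx hy hxy

/-- For odd squarefree `N`, the number of square roots of `a` modulo `N` is `∑_{d ∣ N} (a/d)`. For a
prime this is `1 + (a/p)`; the general case follows by the Chinese remainder theorem. -/
lemma card_sqrt_eq (N : ℕ) (hsf : Squarefree N) (hodd : Odd N) (a : ℤ) :
    (Nat.card {x : ZMod N // x ^ 2 = a} : ℤ) = ∑ d ∈ N.divisors, jacobiSym a d := by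
  induction N using Nat.recOnPrimeCoprime with
  | zero => simp at hodd
  | prime_pow p k hp =>
    have : Fact p.Prime := ⟨hp⟩
    have hk : k = 0 ∨ k = 1 := by
      by_contra hk
      push Not at hk
      exact hk.2 ((Nat.squarefree_pow_iff hp.ne_one hk.1).mp hsf).2
    rcases hk with rfl | rfl
    · simp only [pow_zero, Nat.divisors_one, Finset.sum_singleton, jacobiSym.one_right]
      have : Nat.card {x : ZMod 1 // x ^ 2 = a} = 1 := by
        rw [Nat.card_eq_one_iff_unique]
        exact ⟨⟨fun x y => Subtype.ext (Subsingleton.elim _ _)⟩, ⟨⟨0, Subsingleton.elim _ _⟩⟩⟩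
      exact_mod_cast this
    · revert hodd
      rw [pow_one]
      intro hodd
      have hp2 : p ≠ 2 := by rintro rfl; exact absurd hodd (by decide)
      have := legendreSym.card_sqrts p hp2 a
      rw [hp.sum_divisors, jacobiSym.one_right, ← jacobiSym.legendreSym.to_jacobiSym, ← this,
        Nat.card_eq_fintype_card, Fintype.card_subtype, Set.toFinset_ofPred]
  | coprime m n hm hn h ihm ihn =>
    rw [Nat.odd_mul] at hodd
    rw [Nat.squarefree_mul h] at hsf
    rw [sum_divisors_coprime h, ← ihm hsf.1 hodd.1, ← ihn hsf.2 hodd.2, ← Nat.cast_mul,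
      ← Nat.card_prod]
    · congr 1
      let e := ZMod.chineseRemainder h
      refine Nat.card_congr
        { toFun := fun x => (⟨(e x.1).1, ?_⟩, ⟨(e x.1).2, ?_⟩)
          invFun := fun y => ⟨e.symm (y.1.1, y.2.1), ?_⟩
          left_inv := fun x => by simp
          right_inv := fun x => by simp }
      · rw [← Prod.pow_fst, ← map_pow, x.2, map_intCast, Prod.fst_intCast]
      · rw [← Prod.pow_snd, ← map_pow, x.2, map_intCast, Prod.snd_intCast]
      · rw [← map_pow, RingEquiv.symm_apply_eq, map_intCast]
        exact Prod.ext y.1.2 y.2.2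
    · intro a' ha b hb
      exact jacobiSym.mul_right' _ (Nat.pos_of_mem_divisors ha).ne' (Nat.pos_of_mem_divisors hb).ne.symm

/-- The Jacobi symbol `(·/n)` as a complex-valued function on `ZMod n`. -/
noncomputable def chi (n : ℕ) (a : ZMod n) : ℂ := ((jacobiSym (a.val : ℤ) n : ℤ) : ℂ)

lemma chi_intCast (n : ℕ) [NeZero n] (a : ℤ) : chi n (a : ZMod n) = (jacobiSym a n : ℂ) := by
  rw [chi, ZMod.val_intCast, ← jacobiSym.mod_left]

lemma chi_natCast (n : ℕ) [NeZero n] (a : ℕ) : chi n (a : ZMod n) = (jacobiSym a n : ℂ) := by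
  exact_mod_cast chi_intCast n a

lemma chi_mul (n : ℕ) [NeZero n] (a b : ZMod n) : chi n (a * b) = chi n a * chi n b := by
  obtain ⟨a, rfl⟩ := ZMod.intCast_surjective a
  obtain ⟨b, rfl⟩ := ZMod.intCast_surjective b
  rw [← Int.cast_mul, chi_intCast, chi_intCast, chi_intCast, jacobiSym.mul_left]
  push_cast; rfl

lemma chi_even (n : ℕ) [NeZero n] (h : n % 4 = 1) : (chi n).Even := by
  intro a
  have : chi n (-1) = 1 := by
    have := chi_intCast n (-1)
    rw [jacobiSym.at_neg_one (Nat.odd_iff.mpr (by omega)), ZMod.χ₄_nat_one_mod_four h] at this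
    simpa using this
  rw [neg_eq_neg_one_mul, chi_mul, this, one_mul]

lemma chi_sq (n : ℕ) [NeZero n] {a : ZMod n} (ha : IsUnit a) : chi n a * chi n a = 1 := by
  obtain ⟨k, rfl⟩ := ZMod.natCast_zmod_surjective a
  rw [ZMod.isUnit_iff_coprime] at ha
  rw [chi_natCast]
  have := jacobiSym.sq_one (a := k) (b := n) (by simpa [Int.gcd_natCast_natCast] using ha)
  rw [← pow_two]
  exact_mod_cast this

lemma chi_nonunit (n : ℕ) [NeZero n] {a : ZMod n} (ha : ¬ IsUnit a) : chi n a = 0 := by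
  obtain ⟨k, rfl⟩ := ZMod.natCast_zmod_surjective a
  rw [ZMod.isUnit_iff_coprime] at ha
  rw [chi_natCast,
    jacobiSym.eq_zero_iff_not_coprime.mpr (by simpa [Int.gcd_natCast_natCast] using ha)]
  simp

/-- The Gauss sum of `(·/n)`. Sorting `∑ e(k²/n)` by the value of `k²` gives
`∑_{d ∣ n} ∑_a (a/d) e(a/n)`, and the inner sum vanishes for proper divisors `d`. -/
lemma chi_gauss (n : ℕ) [NeZero n] (hsf : Squarefree n) (h : n % 4 = 1) :
    ∑ a : ZMod n, chi n a * ZMod.stdAddChar a = ((√n : ℝ) : ℂ) := by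
  have hodd : Odd n := Nat.odd_iff.mpr (by omega)
  have h1 : ∑ k : ZMod n, (ZMod.stdAddChar (k ^ 2) : ℂ) = ((√n : ℝ) : ℂ) := by
    rw [← quadratic_gauss_sum n h]
    refine (Fintype.sum_bijective (fun r : Fin n => ((r : ℕ) : ZMod n)) ⟨?_, ?_⟩ _ _ ?_).symm
    · intro r r' hr
      have := congrArg ZMod.val hr
      rw [ZMod.val_natCast_of_lt r.2, ZMod.val_natCast_of_lt r'.2] at this
      exact Fin.ext this
    · exact fun x => ⟨⟨x.val, x.val_lt⟩, ZMod.natCast_zmod_val x⟩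
    · intro r
      have h2 := ZMod.stdAddChar_coe (N := n) (((r : ℕ) : ℤ) ^ 2)
      push_cast at h2
      exact h2.symm
  rw [← h1]
  have h2 : ∑ k : ZMod n, (ZMod.stdAddChar (k ^ 2) : ℂ) =
      ∑ a : ZMod n, (∑ d ∈ n.divisors, (jacobiSym a.val d : ℂ)) * ZMod.stdAddChar a := by
    rw [← Finset.sum_fiberwise (g := fun k : ZMod n => k ^ 2)]
    refine Finset.sum_congr rfl fun a _ => ?_
    have h3 := card_sqrt_eq n hsf hodd a.val
    rw [← Int.cast_sum, ← h3]
    rw [Finset.sum_congr rfl (g := fun _ => (ZMod.stdAddChar a : ℂ))]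
    · rw [Finset.sum_const, nsmul_eq_mul, Nat.card_eq_fintype_card, Fintype.card_subtype]
      simp
    · intro k hk
      rw [(Finset.mem_filter.mp hk).2]
  rw [h2]
  simp_rw [Finset.sum_mul]
  rw [Finset.sum_comm, Finset.sum_eq_single n]
  · rfl
  · intro d hd hdn
    have hdv := Nat.dvd_of_mem_divisors hd
    have hne : (ZMod.stdAddChar (d : ZMod n) : ℂ) ≠ 1 := by
      rw [← AddChar.map_zero_eq_one (ZMod.stdAddChar (N := n)), ZMod.injective_stdAddChar.ne_iff,
        ne_eq, ZMod.natCast_eq_zero_iff]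
      exact fun h => hdn (Nat.dvd_antisymm hdv h)
    -- translating by `d` fixes `(x/d)` and multiplies the sum by `e(d/n) ≠ 1`
    have key : ∑ x : ZMod n, (jacobiSym x.val d : ℂ) * ZMod.stdAddChar x =
        ZMod.stdAddChar (d : ZMod n) * ∑ x : ZMod n, (jacobiSym x.val d : ℂ) * ZMod.stdAddChar x := by
      conv_lhs => rw [← Equiv.sum_comp (Equiv.addRight (d : ZMod n))]
      rw [Finset.mul_sum]
      refine Finset.sum_congr rfl fun x _ => ?_
      rw [Equiv.coe_addRight, AddChar.map_add_eq_mul]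
      have : jacobiSym ((x + d : ZMod n).val : ℤ) d = jacobiSym x.val d := by
        refine jacobiSym.mod_left' ?_
        have e : (x + d : ZMod n) = ((x.val + d : ℕ) : ZMod n) := by simp
        rw [e, ZMod.val_natCast]
        norm_cast
        rw [Nat.mod_mod_of_dvd _ hdv, Nat.add_mod_right]
      rw [this]; ring
    by_contra hS
    exact hne (mul_right_cancel₀ hS (by rw [one_mul]; exact key.symm))
  · intro h; exact absurd (Nat.mem_divisors_self n (NeZero.ne n)) h

/-- The Jacobi symbol to a squarefree modulus `n ≡ 1 (mod 4)` is its own Fourier transform up to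
the factor `√n`. -/
lemma chi_dft (n : ℕ) [NeZero n] (hsf : Squarefree n) (h : n % 4 = 1) :
    ZMod.dft (chi n) = fun k => ((√n : ℝ) : ℂ) * chi n k := by
  funext k
  rw [ZMod.dft_apply]
  have hodd : Odd n := Nat.odd_iff.mpr (by omega)
  have hmul (u : ZMod n) (hu : IsUnit u) (k : ZMod n) :
      ∑ j : ZMod n, (ZMod.stdAddChar (-(j * k)) : ℂ) • chi n j =
      chi n u * ∑ j : ZMod n, (ZMod.stdAddChar (-(j * (u * k))) : ℂ) • chi n j := by
    obtain ⟨u, rfl⟩ := hu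
    conv_lhs => rw [← Equiv.sum_comp u.mulRight]
    rw [Finset.mul_sum]
    refine Finset.sum_congr rfl fun x _ => ?_
    simp only [Units.mulRight_apply, chi_mul, smul_eq_mul]
    rw [mul_assoc x]; ring
  by_cases hk : IsUnit k
  · obtain ⟨u, rfl⟩ := hk
    rw [hmul _ (-u⁻¹).isUnit]
    have h1 : (((-u⁻¹ : (ZMod n)ˣ) : ZMod n)) * u = -1 := by simp
    rw [h1, ← chi_gauss n hsf h, mul_comm]
    have h2 : chi n ((-u⁻¹ : (ZMod n)ˣ) : ZMod n) = chi n u := by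
      have := chi_mul n ((-u⁻¹ : (ZMod n)ˣ) : ZMod n) u
      rw [h1, chi_even n h] at this
      have h3 := chi_sq n u.isUnit
      have h4 : chi n 1 = 1 := by simpa using chi_natCast n 1
      rw [h4] at this
      linear_combination (chi n (-u⁻¹ : (ZMod n)ˣ)) * h3 * (-1) - chi n u * this
    rw [h2]
    congr 1
    exact Finset.sum_congr rfl fun j _ => by simp [mul_comm]
  -- for `p ∣ gcd(n, k)` there is a unit `u` with `u k = k` and `χ(u) = -1`, so the sum is zero:
  -- `u` is a non-residue modulo `p` and `1` modulo `n / p`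
  · rw [chi_nonunit n hk, mul_zero]
    obtain ⟨m, rfl⟩ := ZMod.natCast_zmod_surjective k
    rw [ZMod.isUnit_iff_coprime, Nat.Prime.not_coprime_iff_dvd] at hk
    obtain ⟨p, hp, hpm, q, rfl⟩ := hk
    have : Fact p.Prime := ⟨hp⟩
    have hcop : p.Coprime q := Nat.coprime_of_squarefree_mul hsf
    have hp2 : p ≠ 2 := by rintro rfl; exact absurd hodd (by simp)
    obtain ⟨r, hr⟩ := quadraticChar_exists_neg_one (F := ZMod p)
      ((ZMod.ringChar_zmod_n p).substr hp2)
    obtain ⟨u, hu1, hu2⟩ := Nat.chineseRemainder hcop r.val 1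
    have hq0 : q ≠ 0 := by rintro rfl; exact NeZero.ne (p * 0) (by simp)
    have hchi : chi (p * q) (u : ZMod (p * q)) = -1 := by
      rw [chi_natCast, jacobiSym.mul_right' _ hp.ne_zero hq0]
      have h1 : jacobiSym u q = 1 := by
        rw [jacobiSym.mod_left' (a₂ := 1) (by exact_mod_cast hu2), jacobiSym.one_left]
      have h2 : jacobiSym u p = -1 := by
        rw [← jacobiSym.legendreSym.to_jacobiSym, legendreSym, ← hr]
        congr 1
        have := (ZMod.natCast_eq_natCast_iff _ _ _).mpr hu1
        simpa using this
      rw [h1, h2]; simp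
    have hu : IsUnit (u : ZMod (p * q)) := by
      by_contra hu
      rw [chi_nonunit _ hu] at hchi
      norm_num at hchi
    have hkey := hmul u hu m
    have h3 : (u : ZMod (p * q)) * m = m := by
      rw [← Nat.cast_mul, ZMod.natCast_eq_natCast_iff, ← Nat.modEq_and_modEq_iff_modEq_mul hcop]
      refine ⟨?_, by simpa using hu2.mul_right m⟩
      exact ((Nat.modEq_zero_iff_dvd.mpr (hpm.mul_left u))).trans (Nat.modEq_zero_iff_dvd.mpr hpm).symm
    rw [h3, hchi] at hkey
    linear_combination hkey / 2

/-! ### The even entire function behind the functional equation -/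

lemma Lchi_eq (n : ℕ) [NeZero n] (s : ℂ) : Lchi n s = ZMod.LFunction (chi n) s := by
  rw [Lchi, dif_neg (NeZero.ne n)]
  rfl

lemma norm_two_cpow_le {z : ℂ} (hz : z.re ≤ 1) : ‖(2 : ℂ) ^ z‖ ≤ 2 := by
  have h := norm_natCast_cpow_of_pos (n := 2) (by norm_num) z
  push_cast at h
  rw [h]
  exact (Real.rpow_le_rpow_of_exponent_le (by norm_num) hz).trans (by norm_num)

/-- The function `F` whose value at `0` is `(1 - 1/√2)² L(1/2, χ_n)`: entire, even and bounded on
`|Re z| ≤ 1`. It is built from the completed `L`-function; the stated formula is restricted to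
`0 ≤ Re z`, where the gamma factor has no pole. -/
lemma exists_entire (n : ℕ) (hn : 1 < n) (hsf : Squarefree n) (h4 : n % 4 = 1) :
    ∃ F : ℂ → ℂ, Differentiable ℂ F ∧ (∀ z, F (-z) = F z) ∧
      (∃ C : ℝ, ∀ z, |z.re| ≤ 1 → ‖F z‖ ≤ C) ∧
      ∀ z : ℂ, 0 ≤ z.re → F z = Gamma (z / 2 + 1 / 4) / Gamma (1 / 4) *
        (1 - 2 ^ (z - 1 / 2)) * ((1 - 2 ^ (-(1 / 2 + z))) * Lchi n (1 / 2 + z)) *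
        ((√(Real.pi / n) : ℝ) : ℂ) ^ (-z) := by
  have : NeZero n := ⟨by omega⟩
  have hnc : (n : ℂ) ≠ 0 := NeZero.ne _
  have hn0 : (0 : ℝ) < n := by exact_mod_cast (by omega : 0 < n)
  have he := chi_even n h4
  have h0 : chi n 0 = 0 := by
    have : Fact (1 < n) := ⟨hn⟩
    exact chi_nonunit n not_isUnit_zero
  have hs : ∑ j, chi n j = 0 := by
    rw [← ZMod.dft_apply_zero, chi_dft n hsf h4]
    show _ * chi n 0 = 0
    rw [h0, mul_zero]
  obtain ⟨C, hC⟩ := completedL_bounded (chi n) he h0 hs (-1 / 2) (3 / 2)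
  have hfe (s : ℂ) : ZMod.completedLFunction (chi n) (1 - s) =
      n ^ (s - 1 / 2) * ZMod.completedLFunction (chi n) s := by
    rw [ZMod.completedLFunction_one_sub_even he s (.inr hs) (.inr h0), chi_dft n hsf h4,
      ZMod.completedLFunction_const_mul, ← mul_assoc]
    congr 1
    have : ((√n : ℝ) : ℂ) = (n : ℂ) ^ (1 / 2 : ℂ) := by
      rw [Real.sqrt_eq_rpow, ofReal_cpow hn0.le]
      push_cast; rfl
    rw [this, ← cpow_add _ _ hnc]
    congr 1; ring
  let K : ℂ := (Real.pi : ℂ) ^ (1 / 4 : ℂ) / Gamma (1 / 4)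
  refine ⟨fun z => K * ((1 - 2 ^ (z - 1 / 2)) * (1 - 2 ^ (-z - 1 / 2))) *
    (n ^ (z / 2) * ZMod.completedLFunction (chi n) (1 / 2 + z)), ?_, ?_, ?_, ?_⟩
  · have h1 := ZMod.differentiable_completedLFunction h0 hs
    have h2 : Differentiable ℂ fun z : ℂ => ZMod.completedLFunction (chi n) (1 / 2 + z) :=
      h1.comp (differentiable_id.const_add _)
    have h3 : Differentiable ℂ fun z : ℂ => (2 : ℂ) ^ (z - 1 / 2) :=
      (differentiable_id.sub_const _).const_cpow (.inl two_ne_zero)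
    have h4 : Differentiable ℂ fun z : ℂ => (2 : ℂ) ^ (-z - 1 / 2) :=
      (differentiable_id.neg.sub_const _).const_cpow (.inl two_ne_zero)
    have h5 : Differentiable ℂ fun z : ℂ => (n : ℂ) ^ (z / 2) :=
      (differentiable_id.div_const _).const_cpow (.inl hnc)
    exact (((h3.const_sub 1).mul (h4.const_sub 1)).const_mul K).mul (h5.mul h2)
  · intro z
    have h1 := hfe (1 / 2 + z)
    rw [show (1 - (1 / 2 + z) : ℂ) = 1 / 2 + -z by ring, show (1 / 2 + z - 1 / 2 : ℂ) = z by ring]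
      at h1
    have h2 : (n : ℂ) ^ (-z / 2) * n ^ z = n ^ (z / 2) := by
      rw [← cpow_add _ _ hnc]; congr 1; ring
    simp only [neg_neg, h1]
    rw [← h2]; ring
  · refine ⟨‖K‖ * (3 * 3) * (n * C), fun z hz => ?_⟩
    rw [abs_le] at hz
    have b1 : ‖(1 : ℂ) - 2 ^ (z - 1 / 2)‖ ≤ 3 := by
      refine (norm_sub_le _ _).trans ?_
      have := norm_two_cpow_le (z := z - 1 / 2) (by simp; linarith)
      rw [norm_one]; linarith
    have b2 : ‖(1 : ℂ) - 2 ^ (-z - 1 / 2)‖ ≤ 3 := by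
      refine (norm_sub_le _ _).trans ?_
      have := norm_two_cpow_le (z := -z - 1 / 2) (by simp; linarith)
      rw [norm_one]; linarith
    have b3 : ‖(n : ℂ) ^ (z / 2)‖ ≤ n := by
      rw [norm_natCast_cpow_of_pos (by omega)]
      refine (Real.rpow_le_rpow_of_exponent_le (by exact_mod_cast hn.le)
        (show (z / 2).re ≤ 1 by simp; linarith)).trans (by simp)
    have b4 := hC (1 / 2 + z) (by simp; linarith) (by simp; linarith)
    simp only [norm_mul]
    gcongr
  · intro z hz
    have hG : Gammaℝ (1 / 2 + z) ≠ 0 := Gammaℝ_ne_zero_of_re_pos (by simp; linarith)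
    have hL := ZMod.LFunction_eq_completed_div_gammaFactor_even he (1 / 2 + z) (.inr h0)
    rw [eq_div_iff hG] at hL
    have hpi : (Real.pi : ℂ) ≠ 0 := by exact_mod_cast Real.pi_ne_zero
    have h1 : ((√(Real.pi / n) : ℝ) : ℂ) ^ (-z) = n ^ (z / 2) * Real.pi ^ (-z / 2) := by
      have hp : 0 < √(Real.pi / n) := Real.sqrt_pos.mpr (div_pos Real.pi_pos hn0)
      rw [cpow_def_of_ne_zero (by exact_mod_cast hp.ne'), cpow_def_of_ne_zero hnc,
        cpow_def_of_ne_zero hpi, ← ofReal_log hp.le, ← ofReal_natCast, ← ofReal_log hn0.le,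
        ← ofReal_log Real.pi_pos.le, Real.log_sqrt (div_pos Real.pi_pos hn0).le,
        Real.log_div Real.pi_ne_zero hn0.ne', ← Complex.exp_add]
      congr 1
      push_cast
      ring
    have h2 : (Real.pi : ℂ) ^ (1 / 4 : ℂ) * Real.pi ^ (-(1 / 2 + z) / 2) =
        Real.pi ^ (-z / 2) := by
      rw [← cpow_add _ _ hpi]; congr 1; ring
    rw [h1, Lchi_eq, ← h2]
    simp only [K]
    rw [← hL, Gammaℝ_def, show (1 / 2 + z) / 2 = z / 2 + 1 / 4 by ring,
      show -(1 / 2 + z) = -z - 1 / 2 by ring]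
    ring

/-! ### The weight functions and the approximate functional equation -/

lemma norm_Gamma_le {z : ℂ} (hz : 0 < z.re) : ‖Gamma z‖ ≤ Real.Gamma z.re := by
  rw [Gamma_eq_integral hz, Real.Gamma_eq_integral hz, GammaIntegral]
  refine (norm_integral_le_integral_norm _).trans_eq ?_
  refine setIntegral_congr_fun measurableSet_Ioi fun x hx => ?_
  rw [mem_Ioi] at hx
  simp only [norm_mul, norm_cpow_eq_rpow_re_of_pos hx, Complex.norm_real, sub_re, one_re,
    Real.norm_eq_abs, abs_of_pos (Real.exp_pos _)]

/-- The Mellin kernel of `ω_j`: the integrand without the factor `ξ^{-z}/z`. -/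
noncomputable def kern (j : ℕ) (z : ℂ) : ℂ :=
  (Gamma (z / 2 + 1 / 4) / Gamma (1 / 4)) ^ j * (1 - 2 ^ (z - 1 / 2)) ^ j

lemma kern_differentiableAt (j : ℕ) {z : ℂ} (hz : 0 < z.re) : DifferentiableAt ℂ (kern j) z := by
  have h1 : DifferentiableAt ℂ Gamma (z / 2 + 1 / 4) := by
    refine differentiableAt_Gamma _ fun m h => ?_
    have := congrArg re h
    simp at this
    linarith [(Nat.cast_nonneg m : (0 : ℝ) ≤ m)]
  have h2 : DifferentiableAt ℂ (fun z : ℂ => Gamma (z / 2 + 1 / 4)) z :=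
    DifferentiableAt.comp z h1 ((differentiableAt_id.div_const _).add_const _)
  have h3 : DifferentiableAt ℂ (fun z : ℂ => (2 : ℂ) ^ (z - 1 / 2)) z :=
    (differentiableAt_id.sub_const _).const_cpow (.inl two_ne_zero)
  exact ((h2.div_const _).pow j).mul ((h3.const_sub 1).pow j)

/-- A weak substitute for Stirling: `Γ(w) = Γ(w + 1)/w` and `|Γ(w + 1)| ≤ Γ(Re w + 1)` give decay of
order `1/|z|` on vertical strips, which suffices for absolute convergence. -/
lemma gamma_bound {a b : ℝ} (ha : 0 < a) :
    ∃ A : ℝ, 0 ≤ A ∧ ∀ z : ℂ, a ≤ z.re → z.re ≤ b → ‖Gamma (z / 2 + 1 / 4)‖ ≤ A / ‖z‖ := by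
  have hcont : ContinuousOn Real.Gamma (Icc (a / 2 + 5 / 4) (b / 2 + 5 / 4)) := by
    refine Real.differentiableOn_Gamma_Ioi.continuousOn.mono fun x hx => ?_
    have := hx.1
    rw [mem_Ioi]; linarith
  obtain ⟨A, hA⟩ := isCompact_Icc.exists_bound_of_continuousOn hcont
  refine ⟨2 * |A|, by positivity, fun z h1 h2 => ?_⟩
  have hz : 0 < z.re := ha.trans_le h1
  have hz0 : z ≠ 0 := fun h => by simp [h] at hz
  set w := z / 2 + 1 / 4 with hw
  have hwre : w.re = z.re / 2 + 1 / 4 := by simp [hw]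
  have hw0 : w ≠ 0 := fun h => by
    have := congrArg re h
    rw [hwre, zero_re] at this; linarith
  have hG : Gamma (w + 1) = w * Gamma w := Gamma_add_one w hw0
  have h3 : ‖Gamma (w + 1)‖ ≤ |A| := by
    refine (norm_Gamma_le (by simp [hwre]; linarith)).trans ?_
    refine (le_abs_self _).trans (((hA _ ?_)).trans (le_abs_self A))
    constructor <;> simp [hwre] <;> linarith
  have h4 : ‖z‖ / 2 ≤ ‖w‖ := by
    have : ‖z‖ = 2 * ‖z / 2‖ := by rw [norm_div, Complex.norm_two]; ring
    rw [this, mul_div_cancel_left₀ _ (two_ne_zero)]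
    rw [norm_def, norm_def]
    refine Real.sqrt_le_sqrt ?_
    rw [normSq_apply, normSq_apply, hwre, show w.im = z.im / 2 by simp [hw],
      show (z / 2).re = z.re / 2 by simp, show (z / 2).im = z.im / 2 by simp]
    nlinarith
  have hzn : 0 < ‖z‖ := norm_pos_iff.mpr hz0
  rw [hG, norm_mul] at h3
  rw [le_div_iff₀ hzn]
  nlinarith [norm_nonneg (Gamma w)]

lemma kern_bound {j : ℕ} (hj : 1 ≤ j) {a b : ℝ} (ha : 0 < a) :
    ∃ A : ℝ, ∀ z : ℂ, a ≤ z.re → z.re ≤ b → ‖kern j z‖ ≤ A / ‖z‖ := by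
  obtain ⟨A, hA0, hA⟩ := gamma_bound (b := b) ha
  set g := ‖Gamma (1 / 4 : ℂ)‖ with hg
  obtain ⟨i, rfl⟩ : ∃ i, j = i + 1 := ⟨j - 1, by omega⟩
  set B : ℝ := 1 + 2 ^ (b - 1 / 2) with hB
  refine ⟨(A / a / g) ^ i * (A / g) * B ^ (i + 1), fun z h1 h2 => ?_⟩
  have hz : 0 < z.re := ha.trans_le h1
  have hzn : a ≤ ‖z‖ := h1.trans (re_le_norm z)
  have h3 := hA z h1 h2
  have h4 : ‖(1 : ℂ) - 2 ^ (z - 1 / 2)‖ ≤ B := by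
    refine (norm_sub_le _ _).trans ?_
    have h := norm_natCast_cpow_of_pos (n := 2) (by norm_num) (z - 1 / 2)
    push_cast at h
    rw [norm_one, h, hB]
    gcongr
    · norm_num
    · simp; linarith
  have h5 : ‖Gamma (z / 2 + 1 / 4)‖ ≤ A / a := h3.trans (by gcongr)
  rw [kern, norm_mul, norm_pow, norm_pow, norm_div, ← hg, pow_succ (‖Gamma _‖ / g)]
  calc (‖Gamma (z / 2 + 1 / 4)‖ / g) ^ i * (‖Gamma (z / 2 + 1 / 4)‖ / g) *
        ‖(1 : ℂ) - 2 ^ (z - 1 / 2)‖ ^ (i + 1)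
      ≤ (A / a / g) ^ i * (A / ‖z‖ / g) * B ^ (i + 1) := by gcongr
    _ = _ := by ring

/-- The integrand of `ω_j(ξ)` as a function of the complex variable. -/
noncomputable def integrand (j : ℕ) (ξ : ℝ) (z : ℂ) : ℂ := kern j z * (ξ : ℂ) ^ (-z) / z

lemma integrand_bound {j : ℕ} (hj : 1 ≤ j) {a b : ℝ} (ha : 0 < a) {ξ : ℝ} (hξ : 0 < ξ) :
    ∃ A : ℝ, ∀ z : ℂ, a ≤ z.re → z.re ≤ b → ‖integrand j ξ z‖ ≤ A / ‖z‖ ^ 2 := by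
  obtain ⟨A, hA⟩ := kern_bound (b := b) hj ha
  have hcont : ContinuousOn (fun x : ℝ => ξ ^ (-x)) (Icc a b) := by
    have : Continuous fun x : ℝ => ξ ^ (-x) :=
      continuous_const.rpow continuous_neg fun x => .inl hξ.ne'
    exact this.continuousOn
  obtain ⟨D, hD⟩ := isCompact_Icc.exists_bound_of_continuousOn hcont
  refine ⟨A * D, fun z h1 h2 => ?_⟩
  have h3 := hA z h1 h2
  have h4 : ‖(ξ : ℂ) ^ (-z)‖ ≤ D := by
    rw [norm_cpow_eq_rpow_re_of_pos hξ, neg_re]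
    exact (le_abs_self _).trans (hD z.re ⟨h1, h2⟩)
  rw [integrand, norm_div, norm_mul]
  have h0 : 0 ≤ A / ‖z‖ := (norm_nonneg _).trans h3
  calc ‖kern j z‖ * ‖(ξ : ℂ) ^ (-z)‖ / ‖z‖ ≤ (A / ‖z‖) * D / ‖z‖ := by gcongr
    _ = A * D / ‖z‖ ^ 2 := by ring

lemma integrand_differentiableAt (j : ℕ) {ξ : ℝ} (hξ : 0 < ξ) {z : ℂ} (hz : 0 < z.re) :
    DifferentiableAt ℂ (integrand j ξ) z := by
  have h1 : DifferentiableAt ℂ (fun z : ℂ => (ξ : ℂ) ^ (-z)) z :=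
    differentiableAt_id.neg.const_cpow (.inl (by exact_mod_cast hξ.ne'))
  exact ((kern_differentiableAt j hz).mul h1).div differentiableAt_id
    fun h => by rw [h] at hz; simp at hz

/-- Decay of order `1/|z|²` makes `f` integrable along the line `Re z = c`. -/
lemma integrable_line {f : ℂ → ℂ} {c A : ℝ} (hc : 0 < c)
    (hf : ∀ z : ℂ, 0 < z.re → ContinuousAt f z)
    (hA : ∀ z : ℂ, z.re = c → ‖f z‖ ≤ A / ‖z‖ ^ 2) :
    Integrable fun t : ℝ => f ((c : ℂ) + t * I) := by
  have hre (t : ℝ) : ((c : ℂ) + t * I).re = c := by simp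
  have hcont : Continuous fun t : ℝ => f ((c : ℂ) + t * I) := by
    rw [continuous_iff_continuousAt]
    intro t
    refine ContinuousAt.comp (g := f) (hf _ (by rw [hre]; exact hc)) ?_
    exact (continuous_const.add (continuous_ofReal.mul continuous_const)).continuousAt
  refine (integrable_inv_one_add_sq.const_mul (|A| / min (c ^ 2) 1)).mono'
    hcont.aestronglyMeasurable (ae_of_all _ fun t => ?_)
  refine (hA _ (hre t)).trans ?_
  have hm : 0 < min (c ^ 2) 1 := lt_min (by positivity) one_pos
  have h1 : min (c ^ 2) 1 * (1 + t ^ 2) ≤ ‖(c : ℂ) + t * I‖ ^ 2 := by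
    rw [← normSq_eq_norm_sq, normSq_apply]
    simp only [add_re, ofReal_re, mul_re, I_re, mul_zero, ofReal_im, I_im, mul_one, sub_self,
      add_zero, add_im, mul_im, zero_add]
    nlinarith [min_le_left (c ^ 2) 1, min_le_right (c ^ 2) 1, sq_nonneg t]
  calc A / ‖(c : ℂ) + t * I‖ ^ 2 ≤ |A| / (min (c ^ 2) 1 * (1 + t ^ 2)) := by
        gcongr
        exact le_abs_self A
    _ = _ := by field_simp

lemma omegaLine_eq (j : ℕ) (c ξ : ℝ) :
    omegaLine j c ξ = (2 * Real.pi)⁻¹ * ∫ t : ℝ, integrand j ξ ((c : ℂ) + t * I) := rfl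

lemma integrand_integrable {j : ℕ} (hj : 1 ≤ j) {c : ℝ} (hc : 0 < c) {ξ : ℝ} (hξ : 0 < ξ) :
    Integrable fun t : ℝ => integrand j ξ ((c : ℂ) + t * I) := by
  obtain ⟨A, hA⟩ := integrand_bound (b := c) hj hc hξ
  exact integrable_line hc (fun z hz => (integrand_differentiableAt j hξ hz).continuousAt)
    fun z hz => hA z hz.ge hz.le

/-- `ω_j(ξ)` does not depend on the line of integration. -/
lemma omegaLine_indep {j : ℕ} (hj : 1 ≤ j) {a b : ℝ} (ha : 0 < a) (hb : 0 < b) {ξ : ℝ}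
    (hξ : 0 < ξ) : omegaLine j a ξ = omegaLine j b ξ := by
  wlog hab : a ≤ b generalizing a b
  · exact (this hb ha (not_le.mp hab).le).symm
  rw [omegaLine_eq, omegaLine_eq]
  congr 1
  obtain ⟨A, hA⟩ := integrand_bound (b := b) hj ha hξ
  refine vertical_eq (integrand j ξ) hab (fun z h1 h2 => integrand_differentiableAt j hξ
    (ha.trans_le h1)) |A| (fun z h1 h2 h3 => (hA z h1 h2).trans ?_)
    (integrand_integrable hj ha hξ) (integrand_integrable hj hb hξ)
  have h4 : |z.im| ≤ ‖z‖ ^ 2 := by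
    nlinarith [abs_im_le_norm z]
  calc A / ‖z‖ ^ 2 ≤ |A| / ‖z‖ ^ 2 := by gcongr; exact le_abs_self A
    _ ≤ |A| / |z.im| := by gcongr

/-- The approximate functional equation for a sequence `f` whose Dirichlet series is the `j`-th power
of `(1 - 2^{-s}) L(s, χ_n)`: integrate `F(z)^j dz/z` over `Re z = 1` in two ways, by `even_line` and
by expanding the Dirichlet series termwise. -/
theorem approx_fe (n : ℕ) (hn : 1 < n) (hsf : Squarefree n) (h4 : n % 4 = 1) {j : ℕ} (hj : 1 ≤ j)
    (f : ℕ → ℂ) (hsum : LSeriesSummable f (3 / 2))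
    (hL : ∀ s : ℂ, s.re = 3 / 2 → LSeries f s = ((1 - 2 ^ (-s)) * Lchi n s) ^ j)
    {c : ℝ} (hc : 0 < c) :
    Lchi n (1 / 2) ^ j = ((2 / (1 - 1 / √2) ^ (2 * j) : ℝ) : ℂ) *
      ∑' ν : ℕ, f ν / ((√ν : ℝ) : ℂ) * omegaLine j c (ν * √(Real.pi / n) ^ j) := by
  obtain ⟨F, hFd, hFe, ⟨C, hC⟩, hF⟩ := exists_entire n hn hsf h4
  have hn0 : (0 : ℝ) < n := by exact_mod_cast (by omega : 0 < n)
  set y := √(Real.pi / n) with hy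
  have hy0 : 0 < y := Real.sqrt_pos.mpr (div_pos Real.pi_pos hn0)
  have hyj : 0 < y ^ j := pow_pos hy0 j
  have hre (t : ℝ) : ((1 : ℝ) + t * I : ℂ).re = 1 := by simp
  have hre2 (z : ℂ) (hz : z.re = 1) : (1 / 2 + z).re = 3 / 2 := by simp [hz]; norm_num
  -- on the line `Re z = 1` the entire function is a Dirichlet series times the integrand
  have hFline (z : ℂ) (hz : z.re = 1) :
      F z ^ j / z = LSeries f (1 / 2 + z) * integrand j (y ^ j) z := by
    have hycpow : ((y ^ j : ℝ) : ℂ) ^ (-z) = ((y : ℂ) ^ (-z)) ^ j := by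
      rw [cpow_def_of_ne_zero (by exact_mod_cast hyj.ne'), cpow_def_of_ne_zero
        (by exact_mod_cast hy0.ne'), ← ofReal_log hyj.le, ← ofReal_log hy0.le, Real.log_pow,
        ← Complex.exp_nat_mul]
      congr 1
      push_cast
      ring
    rw [hF z (by rw [hz]; norm_num), hL _ (hre2 z hz), integrand, kern, hycpow,
      mul_pow, mul_pow, mul_pow]
    ring
  -- the size of the Dirichlet terms is constant along the line, hence summable uniformly there
  have hnt (ν : ℕ) (z : ℂ) (hz : z.re = 1) :
      ‖LSeries.term f (1 / 2 + z) ν‖ = ‖LSeries.term f (3 / 2) ν‖ := by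
    rw [LSeries.norm_term_eq, LSeries.norm_term_eq, hre2 z hz]
    norm_num
  have hterm (ν : ℕ) (z : ℂ) : LSeries.term f (1 / 2 + z) ν * integrand j (y ^ j) z =
      f ν / ((√ν : ℝ) : ℂ) * integrand j (ν * y ^ j) z := by
    rcases eq_or_ne ν 0 with rfl | hν
    · simp
    have hν0 : (0 : ℝ) < ν := by exact_mod_cast Nat.pos_of_ne_zero hν
    have hνc : (ν : ℂ) ≠ 0 := by exact_mod_cast hν
    rw [LSeries.term_of_ne_zero hν, integrand, integrand, ofReal_mul,
      mul_cpow_ofReal_nonneg hν0.le hyj.le, cpow_add _ _ hνc, ofReal_natCast, cpow_neg (ν : ℂ)]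
    have : ((√ν : ℝ) : ℂ) = (ν : ℂ) ^ (1 / 2 : ℂ) := by
      rw [Real.sqrt_eq_rpow, ofReal_cpow hν0.le]
      push_cast; rfl
    rw [this]
    ring
  have hint := integrand_integrable hj one_pos hyj
  have hint' (ν : ℕ) : Integrable fun t : ℝ =>
      LSeries.term f (1 / 2 + ((1 : ℝ) + t * I)) ν * integrand j (y ^ j) ((1 : ℝ) + t * I) := by
    rcases eq_or_ne ν 0 with rfl | hν
    · simp
    simp_rw [hterm]
    have hν0 : (0 : ℝ) < ν := by exact_mod_cast Nat.pos_of_ne_zero hν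
    exact (integrand_integrable hj one_pos (mul_pos hν0 hyj)).const_mul _
  have hS : Summable fun ν : ℕ => ‖LSeries.term f (3 / 2) ν‖ := hsum.norm
  have hkey := hasSum_integral_of_summable_integral_norm hint' (by
    simp_rw [norm_mul, hnt _ _ (hre _), integral_const_mul]
    exact hS.mul_right _)
  have hGint : Integrable fun t : ℝ => F ((1 : ℝ) + t * I) ^ j / ((1 : ℝ) + t * I) := by
    refine (hint.norm.const_mul (∑' ν, ‖LSeries.term f (3 / 2) ν‖)).mono' ?_ (ae_of_all _ fun t => ?_)
    · refine Continuous.aestronglyMeasurable ?_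
      refine Continuous.div ((hFd.continuous.comp (by fun_prop)).pow j) (by fun_prop) fun t h => ?_
      have := congrArg re h
      rw [hre] at this
      simp at this
    · rw [hFline _ (hre t), norm_mul]
      gcongr
      refine (norm_tsum_le_tsum_norm ?_).trans_eq ?_
      · simpa only [hnt _ _ (hre t)] using hS
      · exact tsum_congr fun ν => hnt ν _ (hre t)
  have heven := even_line (fun z => F z ^ j) (hFd.pow j) (fun z => by rw [hFe]) (C ^ j)
    (fun z hz => by rw [norm_pow]; gcongr; exact hC z hz) hGint
  have hrhs : (fun t : ℝ => ∑' ν, LSeries.term f (1 / 2 + ((1 : ℝ) + t * I)) ν *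
      integrand j (y ^ j) ((1 : ℝ) + t * I)) =
      fun t : ℝ => F ((1 : ℝ) + t * I) ^ j / ((1 : ℝ) + t * I) := by
    funext t
    rw [tsum_mul_right, hFline _ (hre t)]
    rfl
  have hF0 : F 0 = (((1 - 1 / √2) ^ 2 : ℝ) : ℂ) * Lchi n (1 / 2) := by
    have hG : Gamma (1 / 4 : ℂ) ≠ 0 := Gamma_ne_zero_of_re_pos (by norm_num)
    have h2 : (2 : ℂ) ^ (-(1 / 2) : ℂ) = ((1 / √2 : ℝ) : ℂ) := by
      rw [Real.sqrt_eq_rpow, one_div (_ ^ _ : ℝ), ← Real.rpow_neg two_pos.le,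
        ofReal_cpow two_pos.le]
      push_cast; rfl
    have := hF 0 (by simp)
    simp only [zero_div, zero_add, add_zero, zero_sub, neg_zero, cpow_zero, div_self hG, h2] at this
    rw [this]; push_cast; ring
  rw [hrhs, heven, hF0] at hkey
  have hfin : HasSum (fun ν : ℕ => f ν / ((√ν : ℝ) : ℂ) * omegaLine j c (ν * y ^ j))
      ((2 * Real.pi)⁻¹ * (Real.pi * ((((1 - 1 / √2) ^ 2 : ℝ) : ℂ) * Lchi n (1 / 2)) ^ j)) := by
    refine (hkey.mul_left _).congr_fun fun ν => ?_
    simp_rw [hterm]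
    rcases eq_or_ne ν 0 with rfl | hν
    · simp
    have hν0 : (0 : ℝ) < ν := by exact_mod_cast Nat.pos_of_ne_zero hν
    rw [omegaLine_indep hj hc one_pos (mul_pos hν0 hyj), omegaLine_eq, integral_const_mul]
    ring
  rw [hfin.tsum_eq]
  have hpi : (Real.pi : ℂ) ≠ 0 := by exact_mod_cast Real.pi_ne_zero
  have hne : (1 - 1 / √2 : ℝ) ≠ 0 := by
    have : 1 < √2 := (Real.lt_sqrt zero_le_one).mpr (by norm_num)
    rw [sub_ne_zero, one_div]
    exact (inv_lt_one_of_one_lt₀ this).ne'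
  have hne' : ((1 - 1 / √2 : ℝ) : ℂ) ≠ 0 := by exact_mod_cast hne
  rw [mul_pow, ← ofReal_pow, ← pow_mul]
  rw [ofReal_div]
  have hne2 : (((1 - 1 / √2 : ℝ) ^ (2 * j) : ℝ) : ℂ) ≠ 0 := by exact_mod_cast pow_ne_zero _ hne
  generalize (((1 - 1 / √2 : ℝ) ^ (2 * j) : ℝ) : ℂ) = X at hne2
  push_cast
  field_simp

/-! ### The coefficients: odd integers and divisor numbers -/

/-- The restriction of `χ_n` to odd integers: the coefficient sequence of the Dirichlet series
`(1 - 2^{-s}) L(s, χ_n)`, because `χ_n(2) = 1` for `n ≡ 1 (mod 8)`. -/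
noncomputable def oddChi (n ν : ℕ) : ℂ := if ν % 2 = 1 then chi n (ν : ZMod n) else 0

lemma oddChi_mul (n : ℕ) [NeZero n] (a b : ℕ) :
    oddChi n (a * b) = oddChi n a * oddChi n b := by
  simp only [oddChi]
  have : a * b % 2 = 1 ↔ a % 2 = 1 ∧ b % 2 = 1 := by
    simp only [← Nat.odd_iff, Nat.odd_mul]
  by_cases ha : a % 2 = 1 <;> by_cases hb : b % 2 = 1 <;> simp [this, ha, hb, chi_mul]

lemma oddChi_eq (n : ℕ) [NeZero n] (h : n % 4 = 1) (ν : ℕ) :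
    oddChi n ν = if ν % 2 = 1 then ((jacobiSym n ν : ℤ) : ℂ) else 0 := by
  rw [oddChi]
  split_ifs with hν
  · rw [chi_natCast, jacobiSym.quadratic_reciprocity_one_mod_four h (Nat.odd_iff.mpr hν)]
  · rfl

lemma chi_two (n : ℕ) [NeZero n] (h : n % 8 = 1) : chi n 2 = 1 := by
  have h2 := chi_natCast n 2
  have h3 := jacobiSym.at_two (b := n) (Nat.odd_iff.mpr (by omega))
  rw [ZMod.χ₈_nat_eq_if_mod_eight, if_neg (by omega), if_pos (Or.inl h)] at h3
  push_cast at h2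
  rw [h2, h3, Int.cast_one]

lemma oddChi_summable (n : ℕ) [NeZero n] {s : ℂ} (hs : 1 < s.re) :
    LSeriesSummable (oddChi n) s := by
  refine .of_norm <| .of_nonneg_of_le (fun _ => norm_nonneg _) (fun ν => ?_)
    (ZMod.LSeriesSummable_of_one_lt_re (chi n) hs).norm
  refine LSeries.norm_term_le s ?_
  rw [oddChi]
  split_ifs
  · exact le_rfl
  · rw [norm_zero]; exact norm_nonneg _

/-- Removing the Euler factor at `2`: the even terms of `L(s, χ_n)` add up to `2^{-s} L(s, χ_n)`. -/
lemma LSeries_oddChi (n : ℕ) [NeZero n] (h : n % 8 = 1) {s : ℂ} (hs : 1 < s.re) :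
    LSeries (oddChi n) s = (1 - 2 ^ (-s)) * Lchi n s := by
  have hs0 : s ≠ 0 := by rintro rfl; simp at hs; linarith
  have hsum := ZMod.LSeriesSummable_of_one_lt_re (chi n) hs
  have hsum' := oddChi_summable n hs
  have heven (k : ℕ) : LSeries.term (fun m : ℕ => chi n m) s (2 * k) =
      2 ^ (-s) * LSeries.term (fun m : ℕ => chi n m) s k := by
    rw [LSeries.term_of_ne_zero' hs0, LSeries.term_of_ne_zero' hs0, Nat.cast_mul, chi_mul,
      Nat.cast_ofNat, chi_two n h, Nat.cast_mul, natCast_mul_natCast_cpow, cpow_neg]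
    push_cast
    field_simp
  have heven' (k : ℕ) : LSeries.term (oddChi n) s (2 * k) = 0 := by
    simp [LSeries.term_def, oddChi]
  have hodd (k : ℕ) : LSeries.term (oddChi n) s (2 * k + 1) =
      LSeries.term (fun m : ℕ => chi n m) s (2 * k + 1) := by
    simp [oddChi, Nat.add_mod]
  have i2 : Function.Injective fun k : ℕ => 2 * k := fun a b h => by simpa using h
  have i3 : Function.Injective fun k : ℕ => 2 * k + 1 := fun a b h => by simpa using h
  have e1 := tsum_even_add_odd (hsum.comp_injective i2) (hsum.comp_injective i3)
  have e2 := tsum_even_add_odd (hsum'.comp_injective i2) (hsum'.comp_injective i3)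
  simp only [heven, heven', hodd, tsum_zero, zero_add, tsum_mul_left] at e1 e2
  rw [Lchi_eq, ZMod.LFunction_eq_LSeries _ hs, LSeries, ← e2, LSeries]
  linear_combination e1

/-- Complete multiplicativity makes all terms of the convolution at `ν` equal. -/
lemma convolution_oddChi (n : ℕ) [NeZero n] (ν : ℕ) :
    LSeries.convolution (oddChi n) (oddChi n) ν = oddChi n ν * ν.divisors.card := by
  rw [LSeries.convolution_def]
  change ∑ p ∈ ν.divisorsAntidiagonal, oddChi n p.1 * oddChi n p.2 = _
  rw [Finset.sum_congr rfl (g := fun _ => oddChi n ν)]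
  · rw [Finset.sum_const, nsmul_eq_mul, mul_comm, ← Nat.map_div_right_divisors, Finset.card_map]
  · intro p hp
    rw [← oddChi_mul, (Nat.mem_divisorsAntidiagonal.mp hp).1]

end

/-- Approximate functional equation: for square-free `n ≡ 1 (mod 8)`, `n > 1`, and `j = 1, 2`,
`L(1/2,χ_n)^j = (2/(1-1/√2)^{2j}) ∑_{ν ≥ 1 odd} χ_n(ν) d_j(ν) ν^{-1/2} ω_j(ν (π/n)^{j/2})`,
where `χ_n(ν) = (n/ν)` is the Kronecker (Jacobi) symbol, `d_1(ν) = 1` and `d_2(ν) = τ(ν)`. -/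
theorem statement5 (n : ℕ) (hn : 1 < n) (hsf : Squarefree n) (hmod : n % 8 = 1) :
    ∀ c : ℝ, 0 < c →
      Lchi n (1/2) =
        ((2 / (1 - 1 / Real.sqrt 2 : ℝ) ^ 2 : ℝ) : ℂ) *
          ∑' ν : ℕ, (if ν % 2 = 1 then
              (((jacobiSym (n : ℤ) ν : ℝ) / Real.sqrt ν : ℝ) : ℂ) *
                omegaLine 1 c (ν * Real.sqrt (Real.pi / n))
            else 0) ∧
      Lchi n (1/2) ^ 2 =
        ((2 / (1 - 1 / Real.sqrt 2 : ℝ) ^ 4 : ℝ) : ℂ) *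
          ∑' ν : ℕ, (if ν % 2 = 1 then
              (((jacobiSym (n : ℤ) ν : ℝ) * (ν.divisors.card : ℝ) / Real.sqrt ν : ℝ) : ℂ) *
                omegaLine 2 c (ν * (Real.pi / n))
            else 0) := by
  intro c hc
  have : NeZero n := ⟨by omega⟩
  have h4 : n % 4 = 1 := by omega
  have hs : (1 : ℝ) < ((3 / 2 : ℂ)).re := by norm_num
  have hsum := oddChi_summable n hs
  constructor
  · have h := approx_fe n hn hsf h4 le_rfl (oddChi n) hsum
      (fun s hs => by rw [pow_one, LSeries_oddChi n hmod (by rw [hs]; norm_num)]) hc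
    rw [pow_one, mul_one] at h
    rw [h]
    congr 1
    refine tsum_congr fun ν => ?_
    rw [oddChi_eq n h4, pow_one]
    split_ifs
    · push_cast; rfl
    · simp
  · have h := approx_fe n hn hsf h4 one_le_two (LSeries.convolution (oddChi n) (oddChi n))
      (hsum.convolution hsum)
      (fun s hs => by
        have hs1 : 1 < s.re := by rw [hs]; norm_num
        rw [LSeries_convolution' (oddChi_summable n hs1) (oddChi_summable n hs1),
          LSeries_oddChi n hmod hs1, sq]) hc
    rw [h]
    congr 1
    refine tsum_congr fun ν => ?_
    rw [convolution_oddChi, oddChi_eq n h4, Real.sq_sqrt (by positivity)]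
    split_ifs
    · push_cast; rfl
    · simp
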